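/- There exist K > 0 and Δt* > 0 such that for all 0 < Δt ≤ Δt* and every bounded measurable L-periodic function f : ℝⁿ → ℝ with ∫_M f dμ = 0, the series g = ∑_{n=0}^∞ P_Δtⁿ f converges in the supremum norm, satisfies (Id − P_Δt) g = f and ∫_M g dμ = 0, and obeys the bound Δt ‖g‖_∞ ≤ K ‖f‖_∞. -/

import Mathlib

/-!
The transition operator `P = Pmala V dt` is Markov, and by detailed balance it preserves the Gibbs
measure `μ`. So it suffices to find `δ > 0`, independent of `dt`, such that
`P^N φ ≥ δ (∫ φ dμ)²` for `0 ≤ φ ≤ 1` and `N = ⌈1/dt⌉` steps: applied to `(1 ± f/‖f‖)/2`, where `f`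
has mean zero, this gives `‖P^N f‖ ≤ (1 - δ/2) ‖f‖`, whence `‖P^k f‖ ≤ (1 - δ/2)^⌊k/N⌋ ‖f‖`, and the
series converges with sum at most `(2N/δ) ‖f‖ ≤ (4/(δ dt)) ‖f‖`.

The minorization comes from a comparison with the heat semigroup `H_t`. By Taylor expansion the
density of the accepted moves `q ↦ q + z` is at least
`heatKernel dt z * exp (-⟨∇V q, z⟩/2 - c (|z|² + dt))`, so Cauchy–Schwarz and a Gaussian integral
give `(H_dt g)² ≤ e^(C dt) P (g²)`. This inequality can be iterated, unlike a direct lower bound on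
the density, because the loss of each step is only a factor `e^(C dt)`:
`(H_T φ)² ≤ e^(C T) P^N (φ²) ≤ e^(C T) P^N φ` with `T = N dt ∈ [1, 2]`. At such times the heat
kernel is bounded below on a period cell, and hence `H_T φ` by a multiple of `∫ φ dμ`.
-/

open MeasureTheory RealInnerProductSpace

noncomputable section

abbrev En (n : ℕ) := EuclideanSpace ℝ (Fin n)

/-- Gaussian proposal density of the Euler–Maruyama scheme. -/
def Tker {n : ℕ} (V : En n → ℝ) (dt : ℝ) (q q' : En n) : ℝ :=
  (4 * Real.pi * dt) ^ (-(n : ℝ) / 2) *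
    Real.exp (-‖q' - q + dt • gradient V q‖ ^ 2 / (4 * dt))

/-- Metropolis acceptance probability. -/
def Rk {n : ℕ} (V : En n → ℝ) (dt : ℝ) (q q' : En n) : ℝ :=
  min 1 (Real.exp (-V q') * Tker V dt q' q / (Real.exp (-V q) * Tker V dt q q'))

/-- proposal move -/
def propMove {n : ℕ} (V : En n → ℝ) (dt : ℝ) (q g : En n) : En n :=
  q - dt • gradient V q + Real.sqrt (2 * dt) • g

def xi {n : ℕ} (V : En n → ℝ) (q g : En n) : ℝ :=
  -(Real.sqrt 2 / 6) * iteratedFDeriv ℝ 3 V q (fun _ => g) +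
    (Real.sqrt 2 / 2) * ⟪gradient V q, fderiv ℝ (gradient V) q g⟫

def xiPlus {n : ℕ} (V : En n → ℝ) (q g : En n) : ℝ := max (xi V q g) 0

/-- standard Gaussian measure on ℝⁿ -/
def gauss (n : ℕ) : Measure (En n) :=
  volume.withDensity fun g =>
    ENNReal.ofReal ((2 * Real.pi) ^ (-(n : ℝ) / 2) * Real.exp (-‖g‖ ^ 2 / 2))

/-- fundamental domain of the torus -/
def Box (n : ℕ) (L : ℝ) : Set (En n) := {q | ∀ i, q i ∈ Set.Ico (0 : ℝ) L}

/-- integral with respect to the Gibbs measure μ on the torus M -/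
def muInt {n : ℕ} (V : En n → ℝ) (L : ℝ) (f : En n → ℝ) : ℝ :=
  (∫ q in Box n L, Real.exp (-V q))⁻¹ * ∫ q in Box n L, f q * Real.exp (-V q)

/-- Laplacian -/
def lap {n : ℕ} (ψ : En n → ℝ) (q : En n) : ℝ :=
  ∑ i, iteratedFDeriv ℝ 2 ψ q (fun _ => EuclideanSpace.single i (1 : ℝ))

/-- generator of the overdamped Langevin dynamics -/
def gen {n : ℕ} (V ψ : En n → ℝ) (q : En n) : ℝ :=
  -⟪gradient V q, gradient ψ q⟫ + lap ψ q

/-- MALA transition operator on periodic functions -/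
def Pmala {n : ℕ} (V : En n → ℝ) (dt : ℝ) (f : En n → ℝ) (q : En n) : ℝ :=
  f q + ∫ q', Rk V dt q q' * Tker V dt q q' * (f q' - f q)

/-- the operator D₁ -/
def D1op {n : ℕ} (V ψ : En n → ℝ) (q : En n) : ℝ :=
  2 * ∑ i, ∑ j, (iteratedFDeriv ℝ 2 V q ![EuclideanSpace.single i (1:ℝ), EuclideanSpace.single j (1:ℝ)]) *
      (iteratedFDeriv ℝ 2 ψ q ![EuclideanSpace.single i (1:ℝ), EuclideanSpace.single j (1:ℝ)])
    + ⟪gradient (fun x => lap V x) q, gradient ψ q⟫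
    - ⟪gradient V q, fderiv ℝ (gradient V) q (gradient ψ q)⟫

/-- the operator D₂ -/
def D2op {n : ℕ} (V ψ : En n → ℝ) (q : En n) : ℝ :=
  -Real.sqrt 2 * ⟪∫ g, xiPlus V q g • g ∂(gauss n), gradient ψ q⟫

/-- the operator A appearing in the expansion of the MALA evolution operator -/
def Aop {n : ℕ} (V ψ : En n → ℝ) (q : En n) : ℝ :=
  (gen V (gen V ψ) q + D1op V ψ q + D2op V ψ q) / 2

/-- Metropolized increment -/
def deltaInc {n : ℕ} (V : En n → ℝ) (dt : ℝ) (q g : En n) (u : ℝ) : En n :=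
  if u ≤ Rk V dt q (propMove V dt q g) then (-dt) • gradient V q + Real.sqrt (2 * dt) • g
  else 0

/-- expectation over G (std Gaussian) and U (uniform on [0,1]) of the increment -/
def EguDelta {n : ℕ} (V : En n → ℝ) (dt : ℝ) (q : En n) : En n :=
  ∫ g, (∫ u in Set.Icc (0 : ℝ) 1, deltaInc V dt q g u) ∂(gauss n)

/-! ### Markov operators and the Poisson equation -/

/-- A Markov operator on an algebra `W` of real functions: a positive linear endomorphism that fixes
the constants. Working on a subalgebra, rather than with a transition kernel, lets `W` record the
periodicity of the functions the operator acts on. -/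
structure IsMarkovOperator {X : Type*} {W : Subalgebra ℝ (X → ℝ)} (P : Module.End ℝ W) : Prop where
  map_one : P 1 = 1
  map_nonneg : ∀ f, 0 ≤ f → 0 ≤ P f

/-- The solution `∑ₖ Pᵏ f` of the Poisson equation `(Id - P) g = f`, as a pointwise sum. -/
def poissonSeries {X : Type*} {W : Subalgebra ℝ (X → ℝ)} (P : Module.End ℝ W) (f : W) (x : X) : ℝ :=
  ∑' k, ((P ^ k) f).1 x

namespace IsMarkovOperator

variable {X : Type*} {W : Subalgebra ℝ (X → ℝ)} {P : Module.End ℝ W}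

lemma mono (hP : IsMarkovOperator P) {f g : W} (h : f ≤ g) : P f ≤ P g := by
  rw [← sub_nonneg, ← map_sub]
  exact hP.map_nonneg _ (sub_nonneg.2 h)

lemma map_algebraMap (hP : IsMarkovOperator P) (c : ℝ) :
    P (algebraMap ℝ W c) = algebraMap ℝ W c := by
  rw [Algebra.algebraMap_eq_smul_one, map_smul, hP.map_one]

lemma le_of_forall_le (hP : IsMarkovOperator P) {f : W} {c : ℝ} (h : ∀ x, f.1 x ≤ c) (x : X) :
    (P f).1 x ≤ c := by
  have hfc : f ≤ algebraMap ℝ W c := h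
  simpa only [hP.map_algebraMap] using! hP.mono hfc x

lemma abs_le_of_forall_abs_le (hP : IsMarkovOperator P) {f : W} {B : ℝ} (h : ∀ x, |f.1 x| ≤ B)
    (x : X) : |(P f).1 x| ≤ B := by
  have hneg := hP.le_of_forall_le (f := -f) (fun x => (neg_le_abs _).trans (h x)) x
  rw [map_neg] at hneg
  exact abs_le'.2 ⟨hP.le_of_forall_le (fun x => (le_abs_self _).trans (h x)) x, hneg⟩

lemma pow (hP : IsMarkovOperator P) (k : ℕ) : IsMarkovOperator (P ^ k) := by
  induction k with
  | zero => exact ⟨rfl, fun _ h => h⟩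
  | succ k ih =>
    rw [pow_succ']
    exact ⟨(congrArg P ih.map_one).trans hP.map_one,
      fun f h => hP.map_nonneg _ (ih.map_nonneg f h)⟩

lemma sq_iterate_le_pow (hP : IsMarkovOperator P) {H : W → W} {C : ℝ} (hC : 0 ≤ C)
    (hH : ∀ g x, (H g).1 x ^ 2 ≤ C * (P (g ^ 2)).1 x) (g : W) (k : ℕ) (x : X) :
    (H^[k] g).1 x ^ 2 ≤ C ^ k * ((P ^ k) (g ^ 2)).1 x := by
  induction k generalizing x with
  | zero => simp
  | succ k ih =>
    have hstep : P ((H^[k] g) ^ 2) ≤ P (C ^ k • (P ^ k) (g ^ 2)) := hP.mono ih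
    rw [Function.iterate_succ_apply', pow_succ' C, pow_succ' P, mul_assoc]
    refine (hH _ x).trans (mul_le_mul_of_nonneg_left ?_ hC)
    simpa only [map_smul] using! hstep x

section Contraction

variable [MeasurableSpace X] {μ : Measure X}

lemma integral_pow (hinv : ∀ f : W, ∫ x, (P f).1 x ∂μ = ∫ x, f.1 x ∂μ) (f : W) (k : ℕ) :
    ∫ x, ((P ^ k) f).1 x ∂μ = ∫ x, f.1 x ∂μ := by
  induction k with
  | zero => rfl
  | succ k ih =>
    rw [pow_succ', ← ih]
    exact hinv _

variable [IsProbabilityMeasure μ]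

lemma neg_le_of_minorization (hP : IsMarkovOperator P) {δ : ℝ}
    (hmin : ∀ φ : W, 0 ≤ φ → φ ≤ 1 → ∀ x, δ * (∫ y, φ.1 y ∂μ) ^ 2 ≤ (P φ).1 x)
    {f : W} (hfi : Integrable f.1 μ) (hf : ∫ x, f.1 x ∂μ = 0) {B : ℝ} (hB : ∀ x, |f.1 x| ≤ B)
    (x : X) : -((1 - δ / 2) * B) ≤ (P f).1 x := by
  rcases ((abs_nonneg _).trans (hB x)).eq_or_lt with rfl | hB0
  · simpa using (abs_le.1 (hP.abs_le_of_forall_abs_le hB x)).1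
  -- Minorize the rescaling `(1 + f / B) / 2` of `f` to `[0, 1]`.
  set φ : W := (2 * B)⁻¹ • (f + B • 1) with hφ
  have hφx : ∀ y, φ.1 y = (2 * B)⁻¹ * (f.1 y + B * 1) := fun _ => rfl
  have hφ0 : 0 ≤ φ := fun y => by
    rw [hφx]
    exact mul_nonneg (by positivity) (by linarith [(abs_le.1 (hB y)).1])
  have hφ1 : φ ≤ 1 := fun y => by
    rw [hφx, inv_mul_le_iff₀ (by positivity)]
    change _ ≤ 2 * B * 1
    linarith [(abs_le.1 (hB y)).2]
  have hmean : ∫ y, φ.1 y ∂μ = 1 / 2 := by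
    simp only [hφx]
    rw [integral_const_mul, integral_add hfi (integrable_const _), hf]
    simp only [integral_const, probReal_univ, smul_eq_mul]
    field_simp
    ring
  have hPφ : (P φ).1 x = (2 * B)⁻¹ * ((P f).1 x + B * 1) := by
    rw [hφ, map_smul, map_add, map_smul, hP.map_one]
    rfl
  have key := hmin φ hφ0 hφ1 x
  rw [hmean, hPφ, le_inv_mul_iff₀ (by positivity)] at key
  linarith

lemma abs_le_of_minorization (hP : IsMarkovOperator P) {δ : ℝ}
    (hmin : ∀ φ : W, 0 ≤ φ → φ ≤ 1 → ∀ x, δ * (∫ y, φ.1 y ∂μ) ^ 2 ≤ (P φ).1 x)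
    {f : W} (hfi : Integrable f.1 μ) (hf : ∫ x, f.1 x ∂μ = 0) {B : ℝ} (hB : ∀ x, |f.1 x| ≤ B)
    (x : X) : |(P f).1 x| ≤ (1 - δ / 2) * B := by
  refine abs_le.2 ⟨hP.neg_le_of_minorization hmin hfi hf hB x, ?_⟩
  have hneg := hP.neg_le_of_minorization hmin (f := -f) hfi.neg
    ((integral_neg _).trans (neg_eq_zero.2 hf)) (fun x => (abs_neg _).trans_le (hB x)) x
  rw [map_neg] at hneg
  exact neg_le_neg_iff.1 hneg

lemma abs_pow_le_of_minorization (hP : IsMarkovOperator P)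
    (hinv : ∀ f : W, ∫ x, (P f).1 x ∂μ = ∫ x, f.1 x ∂μ) (hint : ∀ f : W, Integrable f.1 μ)
    {N : ℕ} {δ : ℝ}
    (hmin : ∀ φ : W, 0 ≤ φ → φ ≤ 1 → ∀ x, δ * (∫ y, φ.1 y ∂μ) ^ 2 ≤ ((P ^ N) φ).1 x)
    {f : W} (hf : ∫ x, f.1 x ∂μ = 0) {B : ℝ} (hB : ∀ x, |f.1 x| ≤ B) (k : ℕ) (x : X) :
    |((P ^ k) f).1 x| ≤ B * (1 - δ / 2) ^ (k / N) := by
  have hblock : ∀ m x, |((P ^ (N * m)) f).1 x| ≤ B * (1 - δ / 2) ^ m := by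
    intro m
    induction m with
    | zero => simpa using hB
    | succ m ih =>
      intro x
      have h := (hP.pow N).abs_le_of_minorization hmin (hint _)
        ((integral_pow hinv f (N * m)).trans hf) ih x
      rw [Nat.mul_succ, add_comm, pow_add]
      exact h.trans_eq (by ring)
  rw [← Nat.mod_add_div k N, pow_add, Nat.mod_add_div k N]
  exact (hP.pow (k % N)).abs_le_of_forall_abs_le (hblock (k / N)) x

end Contraction

section PoissonSeries

variable {f : W} {a : ℕ → ℝ}

lemma tendstoUniformly_poissonSeries (ha : Summable a) (hf : ∀ k x, |((P ^ k) f).1 x| ≤ a k) :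
    TendstoUniformly (fun (m : ℕ) x => (∑ k ∈ Finset.range m, (P ^ k) f).1 x)
      (poissonSeries P f) Filter.atTop := by
  simpa [Finset.sum_apply] using! tendstoUniformly_tsum_nat ha hf

lemma sub_apply_poissonSeries (hP : IsMarkovOperator P) (ha : Summable a)
    (hf : ∀ k x, |((P ^ k) f).1 x| ≤ a k) {g : W} (hg : g.1 = poissonSeries P f) :
    g - P g = f := by
  set S : ℕ → W := fun m => ∑ k ∈ Finset.range m, (P ^ k) f
  have hS : TendstoUniformly (fun m x => (S m).1 x) g.1 Filter.atTop :=
    hg ▸ tendstoUniformly_poissonSeries ha hf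
  have hPS : TendstoUniformly (fun m x => (P (S m)).1 x) (P g).1 Filter.atTop := by
    refine Metric.tendstoUniformly_iff.2 fun ε hε => ?_
    filter_upwards [Metric.tendstoUniformly_iff.1 hS (ε / 2) (half_pos hε)] with m hm x
    have h := hP.abs_le_of_forall_abs_le (f := g - S m) (fun y => (hm y).le) x
    rw [map_sub] at h
    exact h.trans_lt (half_lt_self hε)
  have hshift : ∀ m, S (m + 1) - P (S m) = f := fun m => by
    simp only [S, Finset.sum_range_succ', map_sum, pow_succ', Module.End.mul_apply]
    simp
  refine Subtype.ext (funext fun x => ?_)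
  refine tendsto_nhds_unique
    (((hS.tendsto_at x).comp (Filter.tendsto_add_atTop_nat 1)).sub (hPS.tendsto_at x)) ?_
  exact tendsto_const_nhds.congr fun m => congrFun (congrArg Subtype.val (hshift m).symm) x

lemma abs_poissonSeries_le {s : ℝ} (ha : HasSum a s) (hf : ∀ k x, |((P ^ k) f).1 x| ≤ a k)
    (x : X) : |poissonSeries P f x| ≤ s :=
  tsum_of_norm_bounded (f := fun k => ((P ^ k) f).1 x) ha fun k => hf k x

lemma integral_poissonSeries [MeasurableSpace X] {μ : Measure X} [IsProbabilityMeasure μ]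
    (hinv : ∀ f : W, ∫ x, (P f).1 x ∂μ = ∫ x, f.1 x ∂μ) (hint : ∀ f : W, Integrable f.1 μ)
    (ha : Summable a) (hf : ∀ k x, |((P ^ k) f).1 x| ≤ a k) (hf0 : ∫ x, f.1 x ∂μ = 0) :
    ∫ x, poissonSeries P f x ∂μ = 0 := by
  have hsum : Summable fun k => ∫ x, ‖((P ^ k) f).1 x‖ ∂μ := by
    refine ha.of_nonneg_of_le (fun k => integral_nonneg fun x => norm_nonneg _) fun k => ?_
    simpa using integral_mono (hint _).norm (integrable_const (a k)) (hf k)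
  simp only [poissonSeries]
  rw [← integral_tsum_of_summable_integral_norm (fun k => hint _) hsum]
  simp only [integral_pow hinv, hf0, tsum_zero]

end PoissonSeries

end IsMarkovOperator

lemma hasSum_pow_div {r : ℝ} (hr0 : 0 ≤ r) (hr1 : r < 1) (N : ℕ) [NeZero N] :
    HasSum (fun k : ℕ => r ^ (k / N)) (N / (1 - r)) := by
  rw [← (Nat.divModEquiv N).symm.hasSum_iff]
  have hgeom := hasSum_geometric_of_lt_one hr0 hr1
  have hprod := hgeom.mul (hasSum_fintype fun _ : Fin N => (1 : ℝ))
    (hgeom.summable.mul_of_nonneg (hasSum_fintype _).summable (fun _ => by positivity)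
      fun _ => zero_le_one)
  have hdiv : ∀ p : ℕ × Fin N, (p.1 * N + p.2) / N = p.1 := fun p => by
    rw [add_comm, Nat.add_mul_div_right _ _ (NeZero.pos N), Nat.div_eq_of_lt p.2.2, zero_add]
  simpa [Function.comp_def, hdiv, div_eq_inv_mul] using hprod

/-- The function space `W` is closed under uniform limits of sequences. -/
def IsUniformlyClosed {X : Type*} (W : Subalgebra ℝ (X → ℝ)) : Prop :=
  ∀ (u : ℕ → W) (g : X → ℝ), TendstoUniformly (fun m x => (u m).1 x) g Filter.atTop → g ∈ W

theorem IsMarkovOperator.exists_poisson_solution {X : Type*} [MeasurableSpace X]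
    {W : Subalgebra ℝ (X → ℝ)} (hW : IsUniformlyClosed W) {P : Module.End ℝ W}
    (hP : IsMarkovOperator P) {μ : Measure X} [IsProbabilityMeasure μ]
    (hinv : ∀ f : W, ∫ x, (P f).1 x ∂μ = ∫ x, f.1 x ∂μ) (hint : ∀ f : W, Integrable f.1 μ)
    {N : ℕ} (hN : 0 < N) {δ : ℝ} (hδ : 0 < δ)
    (hmin : ∀ φ : W, 0 ≤ φ → φ ≤ 1 → ∀ x, δ * (∫ y, φ.1 y ∂μ) ^ 2 ≤ ((P ^ N) φ).1 x)
    {f : W} (hf : ∫ x, f.1 x ∂μ = 0) (hfb : ∃ B : ℝ, ∀ x, |f.1 x| ≤ B) :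
    ∃ g : W,
      TendstoUniformly (fun (m : ℕ) x => (∑ k ∈ Finset.range m, (P ^ k) f).1 x) g.1
        Filter.atTop ∧
      g - P g = f ∧ ∫ x, g.1 x ∂μ = 0 ∧
      ∀ B : ℝ, (∀ x, |f.1 x| ≤ B) → ∀ x, |g.1 x| ≤ B * (2 * N / δ) := by
  have : NeZero N := ⟨hN.ne'⟩
  have : Nonempty X := μ.nonempty_of_neZero
  obtain ⟨B₀, hB₀⟩ := hfb
  have hδ1 : δ ≤ 1 := by
    simpa [(hP.pow N).map_one] using! hmin 1 (fun _ => zero_le_one) le_rfl (Classical.arbitrary X)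
  have hdecay : ∀ B : ℝ, (∀ x, |f.1 x| ≤ B) → ∀ k x,
      |((P ^ k) f).1 x| ≤ B * (1 - δ / 2) ^ (k / N) :=
    fun B hB => hP.abs_pow_le_of_minorization hinv hint hmin hf hB
  have hsum : ∀ B : ℝ, HasSum (fun k => B * (1 - δ / 2) ^ (k / N)) (B * (2 * N / δ)) := fun B => by
    have h := hasSum_pow_div (r := 1 - δ / 2) (by linarith) (by linarith) N
    rw [sub_sub_cancel, div_div_eq_mul_div, mul_comm (N : ℝ)] at h
    exact h.mul_left B
  have hunif := tendstoUniformly_poissonSeries (hsum B₀).summable (hdecay B₀ hB₀)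
  refine ⟨⟨poissonSeries P f, hW _ _ hunif⟩, hunif,
    hP.sub_apply_poissonSeries (hsum B₀).summable (hdecay B₀ hB₀) rfl,
    integral_poissonSeries hinv hint (hsum B₀).summable (hdecay B₀ hB₀) hf,
    fun B hB => abs_poissonSeries_le (hsum B) (hdecay B hB)⟩

/-! ### Periodic functions -/

lemma periodic_of_mem_span_int {E β : Type*} [AddCommGroup E] {f : E → β} {s : Set E}
    (hf : ∀ v ∈ s, Function.Periodic f v) {v : E} (hv : v ∈ Submodule.span ℤ s) :
    Function.Periodic f v := by
  induction hv using Submodule.span_induction with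
  | mem v hv => exact hf v hv
  | zero => exact fun x => congrArg f (add_zero x)
  | add v w _ _ hv hw => exact hv.add_period hw
  | smul a v _ hv => exact hv.zsmul a

section Lattice

variable {ι E : Type*} [NormedAddCommGroup E] [NormedSpace ℝ E] (b : Module.Basis ι ℝ E)

lemma periodic_zspan {β : Type*} {f : E → β} (hf : ∀ i, Function.Periodic f (b i))
    (v : Submodule.span ℤ (Set.range b)) : Function.Periodic f v :=
  periodic_of_mem_span_int (Set.forall_mem_range.2 hf) v.2

variable [Finite ι]

lemma exists_norm_le_of_continuous_of_periodic {F : Type*} [SeminormedAddCommGroup F] {f : E → F}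
    (hc : Continuous f) (hf : ∀ i, Function.Periodic f (b i)) : ∃ C, ∀ x, ‖f x‖ ≤ C := by
  have := Fintype.ofFinite ι
  have : FiniteDimensional ℝ E := b.finiteDimensional_of_finite
  have hD : IsCompact (closure (ZSpan.fundamentalDomain b)) :=
    (ZSpan.fundamentalDomain_isBounded b).isCompact_closure
  obtain ⟨C, hC⟩ := hD.exists_bound_of_continuousOn hc.continuousOn
  refine ⟨C, fun x => ?_⟩
  have hfract : f (ZSpan.fract b x) = f x := (periodic_zspan b hf (ZSpan.floor b x)).sub_eq x
  rw [← hfract]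
  exact hC _ (subset_closure (ZSpan.fract_mem_fundamentalDomain b x))

variable [MeasurableSpace E] [BorelSpace E] (ν : Measure E) [ν.IsAddHaarMeasure]

lemma setIntegral_fundamentalDomain_add_left {F : Type*} [NormedAddCommGroup F] [NormedSpace ℝ F]
    {f : E → F} (hf : ∀ i, Function.Periodic f (b i)) (d : E) :
    ∫ x in ZSpan.fundamentalDomain b, f (d + x) ∂ν = ∫ x in ZSpan.fundamentalDomain b, f x ∂ν := by
  have : Countable (Submodule.span ℤ (Set.range b)).toAddSubgroup :=
    inferInstanceAs (Countable (Submodule.span ℤ (Set.range b)))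
  have hD := ZSpan.isAddFundamentalDomain' b ν
  have hinv : ∀ (v : (Submodule.span ℤ (Set.range b)).toAddSubgroup) x, f (v +ᵥ x) = f x :=
    fun v x => (congrArg f (add_comm _ x)).trans (periodic_zspan b hf v x)
  rw [hD.setIntegral_eq (hD.vadd_of_comm d) hinv]
  exact ((measurePreserving_add_left ν d).setIntegral_image_emb
    (measurableEmbedding_addLeft d) f (ZSpan.fundamentalDomain b)).symm

-- Swapping `q` and `q' = q + d` is the substitution `(q, d) ↦ (q + d, -d)`; the translation of `q`
-- is absorbed by periodicity.
lemma setIntegral_fundamentalDomain_eq_zero_of_antisymm {F : E → E → ℝ}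
    (hF : ∀ i q q', F (q + b i) (q' + b i) = F q q') (hanti : ∀ q q', F q' q = -F q q')
    (hint : Integrable (fun p : E × E => F p.1 (p.1 + p.2))
      ((ν.restrict (ZSpan.fundamentalDomain b)).prod ν)) :
    ∫ q in ZSpan.fundamentalDomain b, ∫ q', F q q' ∂ν ∂ν = 0 := by
  have : FiniteDimensional ℝ E := b.finiteDimensional_of_finite
  have hint' : Integrable (fun p : E × E => F (p.1 + p.2) p.1)
      ((ν.restrict (ZSpan.fundamentalDomain b)).prod ν) :=
    hint.neg.congr (ae_of_all _ fun _ => (hanti _ _).symm)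
  refine self_eq_neg.1 ?_
  calc ∫ q in ZSpan.fundamentalDomain b, ∫ q', F q q' ∂ν ∂ν
      = ∫ q in ZSpan.fundamentalDomain b, ∫ d, F q (q + d) ∂ν ∂ν := by
        simp only [integral_add_left_eq_self (μ := ν) (F _)]
    _ = ∫ d, ∫ q in ZSpan.fundamentalDomain b, F q (q + d) ∂ν ∂ν := integral_integral_swap hint
    _ = ∫ d, ∫ q in ZSpan.fundamentalDomain b, F (-d + q) q ∂ν ∂ν := by
        congr 1 with d
        rw [← setIntegral_fundamentalDomain_add_left b ν (f := fun q => F (-d + q) q) _ d]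
        · simp only [add_comm _ d, neg_add_cancel_left]
        · exact fun i q => by simp only [← add_assoc, hF]
    _ = ∫ d, ∫ q in ZSpan.fundamentalDomain b, F (q + d) q ∂ν ∂ν := by
        rw [← integral_neg_eq_self]
        simp only [neg_neg, add_comm]
    _ = ∫ q in ZSpan.fundamentalDomain b, ∫ d, F (q + d) q ∂ν ∂ν :=
        (integral_integral_swap hint').symm
    _ = ∫ q in ZSpan.fundamentalDomain b, ∫ q', -F q q' ∂ν ∂ν := by
        congr 1 with q
        rw [integral_add_left_eq_self (fun q' => F q' q) q, funext (hanti q)]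
    _ = -∫ q in ZSpan.fundamentalDomain b, ∫ q', F q q' ∂ν ∂ν := by
        simp only [integral_neg]

end Lattice

lemma periodic_fderiv {E F : Type*} [NormedAddCommGroup E] [NormedSpace ℝ E]
    [NormedAddCommGroup F] [NormedSpace ℝ F] {f : E → F} {v : E} (hf : Function.Periodic f v) :
    Function.Periodic (fderiv ℝ f) v := fun x => by
  rw [← fderiv_comp_add_right, funext hf]

section Gradient

variable {E : Type*} [NormedAddCommGroup E] [InnerProductSpace ℝ E] [CompleteSpace E] {V : E → ℝ}

lemma periodic_gradient {v : E} (hV : Function.Periodic V v) :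
    Function.Periodic (gradient V) v :=
  (periodic_fderiv hV).comp _

lemma measurable_gradient [MeasurableSpace E] [BorelSpace E] (V : E → ℝ) :
    Measurable (gradient V) :=
  (InnerProductSpace.toDual ℝ E).symm.continuous.measurable.comp (measurable_fderiv ℝ V)

lemma abs_sub_sub_inner_gradient_le (hVd : Differentiable ℝ V) {M : NNReal}
    (hlip : LipschitzWith M (gradient V)) (q q' : E) :
    |V q' - V q - ⟪gradient V q, q' - q⟫| ≤ M * ‖q' - q‖ ^ 2 := by
  have hderiv : ∀ x ∈ segment ℝ q q', ‖fderiv ℝ V x - fderiv ℝ V q‖ ≤ M * ‖q' - q‖ := by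
    intro x hx
    rw [← (InnerProductSpace.toDual ℝ E).symm.norm_map, map_sub]
    refine (hlip.norm_sub_le x q).trans ?_
    gcongr
    exact norm_sub_le_of_mem_segment hx
  have h := (convex_segment q q').norm_image_sub_le_of_norm_fderiv_le' (fun x _ => hVd x) hderiv
    (left_mem_segment ℝ q q') (right_mem_segment ℝ q q')
  simpa [gradient, pow_two, mul_assoc] using h

end Gradient

section PeriodCell

variable {n : ℕ} {L : ℝ}

/-- Periodicity with period `L` in each of the `n` coordinates: `f` is a function on the torus
`(ℝ/Lℤ)ⁿ`. -/
def CoordPeriodic {β : Type*} (L : ℝ) (f : En n → β) : Prop :=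
  ∀ i, Function.Periodic f (L • EuclideanSpace.single i (1 : ℝ))

/-- The basis `L • eᵢ` of `ℝⁿ`, whose integer span is the period lattice of the torus. -/
def periodBasis (n : ℕ) (hL : 0 < L) : Module.Basis (Fin n) ℝ (En n) :=
  (EuclideanSpace.basisFun (Fin n) ℝ).toBasis.isUnitSMul fun _ => IsUnit.mk0 L hL.ne'

lemma periodBasis_apply (hL : 0 < L) (i : Fin n) :
    periodBasis n hL i = L • EuclideanSpace.single i (1 : ℝ) := by
  simp [periodBasis, Module.Basis.isUnitSMul_apply]

lemma coordPeriodic_iff_periodBasis (hL : 0 < L) {β : Type*} {f : En n → β} :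
    CoordPeriodic L f ↔ ∀ i, Function.Periodic f (periodBasis n hL i) := by
  simp only [CoordPeriodic, periodBasis_apply]

lemma box_eq_fundamentalDomain (hL : 0 < L) :
    Box n L = ZSpan.fundamentalDomain (periodBasis n hL) := by
  ext q
  have hrepr : ∀ i, (periodBasis n hL).repr q i = L⁻¹ * q i := by
    simp [periodBasis, Module.Basis.repr_isUnitSMul, Units.smul_def]
  simp only [Box, Set.mem_ofPred_eq, ZSpan.mem_fundamentalDomain, hrepr, Set.mem_Ico,
    inv_mul_lt_iff₀ hL, mul_one, inv_pos.2 hL, mul_nonneg_iff_of_pos_left]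

lemma isBounded_box (hL : 0 < L) : Bornology.IsBounded (Box n L) :=
  box_eq_fundamentalDomain hL ▸ ZSpan.fundamentalDomain_isBounded _

lemma neZero_restrict_box (hL : 0 < L) :
    NeZero ((volume : Measure (En n)).restrict (Box n L)) := by
  rw [box_eq_fundamentalDomain hL]
  exact ⟨Measure.restrict_eq_zero.not.2 (ZSpan.measure_fundamentalDomain_ne_zero _)⟩

lemma isFiniteMeasure_restrict_box (hL : 0 < L) :
    IsFiniteMeasure ((volume : Measure (En n)).restrict (Box n L)) :=
  isFiniteMeasure_restrict.2 (isBounded_box hL).measure_lt_top.ne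

lemma exists_norm_le_of_coordPeriodic (hL : 0 < L) {F : Type*} [SeminormedAddCommGroup F]
    {f : En n → F} (hc : Continuous f) (hf : CoordPeriodic L f) : ∃ C, ∀ q, ‖f q‖ ≤ C :=
  exists_norm_le_of_continuous_of_periodic (periodBasis n hL) hc
    ((coordPeriodic_iff_periodBasis hL).1 hf)

lemma exists_lipschitzWith_gradient (hL : 0 < L) {V : En n → ℝ} (hV : ContDiff ℝ 2 V)
    (hper : CoordPeriodic L V) : ∃ M, LipschitzWith M (gradient V) := by
  have hgrad : ContDiff ℝ 1 (gradient V) :=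
    (InnerProductSpace.toDual ℝ (En n)).symm.contDiff.comp (hV.fderiv_right (by norm_num))
  obtain ⟨C, hC⟩ := exists_norm_le_of_coordPeriodic hL (hgrad.continuous_fderiv one_ne_zero)
    fun i => periodic_fderiv (periodic_gradient (hper i))
  exact ⟨C.toNNReal, lipschitzWith_of_nnnorm_fderiv_le (hgrad.differentiable one_ne_zero)
    fun q => NNReal.le_toNNReal_of_coe_le (hC q)⟩

end PeriodCell

/-! ### The heat semigroup -/

section Heat

variable {E : Type*} [NormedAddCommGroup E] [InnerProductSpace ℝ E] {s t : ℝ}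

/-- The heat kernel at time `t`: the centred Gaussian density of covariance `2t • Id`. -/
def heatKernel (t : ℝ) (z : E) : ℝ :=
  (4 * Real.pi * t) ^ (-(Module.finrank ℝ E : ℝ) / 2) * Real.exp (-‖z‖ ^ 2 / (4 * t))

lemma heatKernel_pos (ht : 0 < t) (z : E) : 0 < heatKernel t z := by
  unfold heatKernel
  positivity

lemma heatKernel_neg (t : ℝ) (z : E) : heatKernel t (-z) = heatKernel t z := by
  rw [heatKernel, norm_neg, heatKernel]

lemma continuous_heatKernel (t : ℝ) : Continuous (heatKernel t : E → ℝ) := by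
  unfold heatKernel
  fun_prop

lemma heatKernel_mul_cexp (ht : 0 < t) (a : ℝ) (c : ℂ) (w z : E) :
    (heatKernel t z : ℂ) * Complex.exp (a * ‖z‖ ^ 2 + c * ⟪w, z⟫) =
      ((4 * Real.pi * t) ^ (-(Module.finrank ℝ E : ℝ) / 2) : ℝ) *
        Complex.exp (-((1 - 4 * t * a) / (4 * t) : ℝ) * ‖z‖ ^ 2 + c * ⟪w, z⟫) := by
  have ht' : (t : ℂ) ≠ 0 := by exact_mod_cast ht.ne'
  rw [heatKernel, Complex.ofReal_mul, Complex.ofReal_exp, mul_assoc, ← Complex.exp_add]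
  congr 2
  push_cast
  field_simp
  ring

lemma exists_pos_le_heatKernel [FiniteDimensional ℝ E] {a b : ℝ} (ha : 0 < a) {S : Set E}
    (hS : Bornology.IsBounded S) :
    ∃ c > 0, ∀ t ∈ Set.Icc a b, ∀ z ∈ S, c ≤ heatKernel t z := by
  have hcomp : IsCompact (Set.Icc a b ×ˢ closure S) := isCompact_Icc.prod hS.isCompact_closure
  have hcont : ContinuousOn (fun p : ℝ × E => heatKernel p.1 p.2) (Set.Icc a b ×ˢ closure S) := by
    have hne : ∀ p ∈ Set.Icc a b ×ˢ closure S, p.1 ≠ 0 := fun p hp => (ha.trans_le hp.1.1).ne'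
    unfold heatKernel
    refine ContinuousOn.mul (ContinuousOn.rpow_const (by fun_prop) fun p hp => .inl ?_) ?_
    · have := hne p hp
      positivity
    · exact Real.continuous_exp.comp_continuousOn
        (ContinuousOn.div (by fun_prop) (by fun_prop)
          fun p hp => mul_ne_zero four_ne_zero (hne p hp))
  obtain ⟨c, hc0, hc⟩ := hcomp.exists_forall_le' hcont fun p hp =>
    heatKernel_pos (ha.trans_le hp.1.1) p.2
  exact ⟨c, hc0, fun t ht z hz => hc (t, z) ⟨ht, subset_closure hz⟩⟩

variable [FiniteDimensional ℝ E] [MeasurableSpace E] [BorelSpace E]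

lemma integrable_heatKernel_mul_cexp (ht : 0 < t) {a : ℝ} (ha : 4 * t * a < 1) (c : ℂ) (w : E) :
    Integrable fun z : E => (heatKernel t z : ℂ) * Complex.exp (a * ‖z‖ ^ 2 + c * ⟪w, z⟫) := by
  simp only [heatKernel_mul_cexp ht]
  refine (GaussianFourier.integrable_cexp_neg_mul_sq_norm_add ?_ c w).const_mul _
  exact div_pos (sub_pos.2 ha) (by positivity)

lemma integral_heatKernel_mul_cexp (ht : 0 < t) {a : ℝ} (ha : 4 * t * a < 1) (c : ℂ) (w : E) :
    ∫ z : E, (heatKernel t z : ℂ) * Complex.exp (a * ‖z‖ ^ 2 + c * ⟪w, z⟫) =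
      ((1 - 4 * t * a) ^ (-(Module.finrank ℝ E : ℝ) / 2) : ℝ) *
        Complex.exp (c ^ 2 * t * ‖w‖ ^ 2 / (1 - 4 * t * a)) := by
  have hr : 0 < 1 - 4 * t * a := sub_pos.2 ha
  set b : ℝ := (1 - 4 * t * a) / (4 * t) with hb
  have hb0 : 0 < b := div_pos hr (by positivity)
  have hprefactor : (4 * Real.pi * t) ^ (-(Module.finrank ℝ E : ℝ) / 2) *
      (Real.pi / b) ^ ((Module.finrank ℝ E : ℝ) / 2) =
        (1 - 4 * t * a) ^ (-(Module.finrank ℝ E : ℝ) / 2) := by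
    rw [← inv_div b, neg_div, Real.inv_rpow (by positivity), ← Real.rpow_neg (by positivity),
      ← Real.mul_rpow (by positivity) (by positivity), hb]
    congr 1
    field_simp
  have hcpow : (((Real.pi / b) ^ ((Module.finrank ℝ E : ℝ) / 2) : ℝ) : ℂ) =
      (Real.pi / b : ℂ) ^ (Module.finrank ℝ E / 2 : ℂ) := by
    rw [Complex.ofReal_cpow (by positivity)]
    push_cast
    rfl
  have hexp : c ^ 2 * ‖w‖ ^ 2 / (4 * b) = c ^ 2 * t * ‖w‖ ^ 2 / (1 - 4 * t * a) := by
    have ht' : (t : ℂ) ≠ 0 := by exact_mod_cast ht.ne'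
    have hr' : (1 - 4 * t * a : ℂ) ≠ 0 := by exact_mod_cast hr.ne'
    rw [hb]
    push_cast
    field_simp
  simp only [heatKernel_mul_cexp ht]
  rw [integral_const_mul, GaussianFourier.integral_cexp_neg_mul_sq_norm_add (b := b) (by simpa),
    ← hprefactor, Complex.ofReal_mul, hcpow, hexp, ← mul_assoc]

lemma integrable_heatKernel_mul_exp (ht : 0 < t) {a : ℝ} (ha : 4 * t * a < 1) (w : E) :
    Integrable fun z : E => heatKernel t z * Real.exp (a * ‖z‖ ^ 2 + ⟪w, z⟫) := by
  have h := (integrable_heatKernel_mul_cexp ht ha 1 w).re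
  simp only [one_mul] at h
  exact_mod_cast h

lemma integral_heatKernel_mul_exp (ht : 0 < t) {a : ℝ} (ha : 4 * t * a < 1) (w : E) :
    ∫ z : E, heatKernel t z * Real.exp (a * ‖z‖ ^ 2 + ⟪w, z⟫) =
      (1 - 4 * t * a) ^ (-(Module.finrank ℝ E : ℝ) / 2) *
        Real.exp (t * ‖w‖ ^ 2 / (1 - 4 * t * a)) := by
  have h := integral_heatKernel_mul_cexp ht ha 1 w
  simp only [one_mul, one_pow] at h
  exact_mod_cast h

lemma integrable_heatKernel (ht : 0 < t) : Integrable (heatKernel t : E → ℝ) := by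
  simpa using integrable_heatKernel_mul_exp (a := 0) ht (by simp) (0 : E)

lemma integral_heatKernel (ht : 0 < t) : ∫ z : E, heatKernel t z = 1 := by
  simpa using integral_heatKernel_mul_exp (a := 0) ht (by simp) (0 : E)

/-- The Gaussian probability measure with density the heat kernel at time `t`. -/
def heatMeasure (E : Type*) [NormedAddCommGroup E] [InnerProductSpace ℝ E]
    [FiniteDimensional ℝ E] [MeasurableSpace E] [BorelSpace E] (t : ℝ) : Measure E :=
  volume.withDensity fun z => ENNReal.ofReal (heatKernel t z)

lemma isProbabilityMeasure_heatMeasure (ht : 0 < t) : IsProbabilityMeasure (heatMeasure E t) := by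
  constructor
  rw [heatMeasure, withDensity_apply _ MeasurableSet.univ, Measure.restrict_univ,
    ← ofReal_integral_eq_lintegral_ofReal (integrable_heatKernel ht)
      (ae_of_all _ fun z => (heatKernel_pos ht z).le), integral_heatKernel ht, ENNReal.ofReal_one]

lemma integral_heatMeasure {F : Type*} [NormedAddCommGroup F] [NormedSpace ℝ F] (ht : 0 < t)
    (f : E → F) : ∫ z, f z ∂heatMeasure E t = ∫ z, heatKernel t z • f z := by
  rw [heatMeasure, integral_withDensity_eq_integral_toReal_smul
    (continuous_heatKernel t).measurable.ennreal_ofReal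
    (ae_of_all _ fun _ => ENNReal.ofReal_lt_top)]
  simp only [ENNReal.toReal_ofReal (heatKernel_pos ht _).le]

lemma charFun_heatMeasure (ht : 0 < t) (w : E) :
    charFun (heatMeasure E t) w = Complex.exp (-t * ‖w‖ ^ 2) := by
  have h := integral_heatKernel_mul_cexp (a := 0) ht (by simp) Complex.I w
  simp only [charFun_apply, integral_heatMeasure ht]
  simpa [real_inner_comm, mul_comm] using h

lemma heatMeasure_conv (hs : 0 < s) (ht : 0 < t) :
    heatMeasure E s ∗ heatMeasure E t = heatMeasure E (s + t) := by
  have := isProbabilityMeasure_heatMeasure (E := E) hs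
  have := isProbabilityMeasure_heatMeasure (E := E) ht
  have := isProbabilityMeasure_heatMeasure (E := E) (add_pos hs ht)
  refine Measure.ext_of_charFun (funext fun w => ?_)
  rw [charFun_conv, charFun_heatMeasure hs, charFun_heatMeasure ht,
    charFun_heatMeasure (add_pos hs ht), ← Complex.exp_add]
  push_cast
  ring_nf

/-- The heat semigroup `g ↦ heatKernel t * g`, written as an average over Gaussian displacements. -/
def heatOp (t : ℝ) (g : E → ℝ) (x : E) : ℝ := ∫ z, g (x + z) ∂heatMeasure E t

lemma measurable_heatOp (ht : 0 < t) {g : E → ℝ} (hg : Measurable g) : Measurable (heatOp t g) := by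
  have := isProbabilityMeasure_heatMeasure (E := E) ht
  have hshift : Measurable fun p : E × E => g (p.1 + p.2) :=
    hg.comp (measurable_fst.add measurable_snd)
  exact hshift.stronglyMeasurable.integral_prod_right.measurable

lemma abs_heatOp_le (ht : 0 < t) {g : E → ℝ} {B : ℝ} (hB : ∀ x, |g x| ≤ B) (x : E) :
    |heatOp t g x| ≤ B := by
  have := isProbabilityMeasure_heatMeasure (E := E) ht
  refine (norm_integral_le_of_norm_le_const (G := ℝ)
    (ae_of_all _ fun z => hB (x + z))).trans_eq ?_
  rw [probReal_univ, mul_one]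

lemma heatOp_heatOp (hs : 0 < s) (ht : 0 < t) {g : E → ℝ} (hg : Measurable g) {B : ℝ}
    (hB : ∀ x, |g x| ≤ B) : heatOp s (heatOp t g) = heatOp (s + t) g := by
  have := isProbabilityMeasure_heatMeasure (E := E) hs
  have := isProbabilityMeasure_heatMeasure (E := E) ht
  funext x
  have hint : Integrable (fun z => g (x + z)) (heatMeasure E s ∗ heatMeasure E t) :=
    .of_bound (hg.comp (measurable_const_add x)).aestronglyMeasurable B (ae_of_all _ fun _ => hB _)
  simp only [heatOp, ← heatMeasure_conv hs ht]
  rw [integral_conv hint]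
  simp only [add_assoc]

lemma exists_pos_mul_setIntegral_le_heatOp {ι : Type*} [Finite ι] (e : Module.Basis ι ℝ E) {a b : ℝ}
    (ha : 0 < a) : ∃ c > 0, ∀ t ∈ Set.Icc a b, ∀ g : E → ℝ, Measurable g → 0 ≤ g →
      (∃ B, ∀ x, |g x| ≤ B) → (∀ i, Function.Periodic g (e i)) → ∀ x,
      c * ∫ y in ZSpan.fundamentalDomain e, g y ≤ heatOp t g x := by
  obtain ⟨c, hc0, hc⟩ := exists_pos_le_heatKernel (b := b) ha (ZSpan.fundamentalDomain_isBounded e)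
  refine ⟨c, hc0, fun t ht g hgm hg0 ⟨B, hB⟩ hper x => ?_⟩
  have ht0 : 0 < t := ha.trans_le ht.1
  have : IsFiniteMeasure (volume.restrict (ZSpan.fundamentalDomain e)) :=
    isFiniteMeasure_restrict.2 (ZSpan.fundamentalDomain_isBounded e).measure_lt_top.ne
  have hint : Integrable fun z => heatKernel t z * g (x + z) :=
    (integrable_heatKernel ht0).mul_bdd (hgm.comp (measurable_const_add x)).aestronglyMeasurable
      (ae_of_all _ fun z => hB _)
  calc c * ∫ y in ZSpan.fundamentalDomain e, g y
      = ∫ z in ZSpan.fundamentalDomain e, c * g (x + z) := by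
        rw [integral_const_mul, setIntegral_fundamentalDomain_add_left e volume hper]
    _ ≤ ∫ z in ZSpan.fundamentalDomain e, heatKernel t z * g (x + z) := by
        have hg : Integrable (fun z => g (x + z))
            (volume.restrict (ZSpan.fundamentalDomain e)) :=
          .of_bound (hgm.comp (measurable_const_add x)).aestronglyMeasurable B
            (ae_of_all _ fun z => hB _)
        exact setIntegral_mono_on (hg.const_mul c) hint.integrableOn
          (ZSpan.fundamentalDomain_measurableSet e)
          fun z hz => mul_le_mul_of_nonneg_right (hc t ht z hz) (hg0 _)
    _ ≤ ∫ z, heatKernel t z * g (x + z) :=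
        setIntegral_le_integral hint
          (ae_of_all _ fun z => mul_nonneg (heatKernel_pos ht0 z).le (hg0 _))
    _ = heatOp t g x := (integral_heatMeasure ht0 _).symm

end Heat

/-! ### The MALA transition operator -/

section MalaKernel

variable {n : ℕ} {V : En n → ℝ} {dt L : ℝ}

lemma Tker_eq_heatKernel (V : En n → ℝ) (dt : ℝ) (q q' : En n) :
    Tker V dt q q' = heatKernel dt (q' - (q - dt • gradient V q)) := by
  rw [Tker, heatKernel, finrank_euclideanSpace_fin, ← sub_add]

lemma Tker_pos (V : En n → ℝ) (hdt : 0 < dt) (q q' : En n) : 0 < Tker V dt q q' :=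
  Tker_eq_heatKernel V dt q q' ▸ heatKernel_pos hdt _

lemma measurable_Tker (V : En n → ℝ) (dt : ℝ) {X : Type*} [MeasurableSpace X] {a b : X → En n}
    (ha : Measurable a) (hb : Measurable b) : Measurable fun x => Tker V dt (a x) (b x) := by
  simp only [Tker_eq_heatKernel]
  exact (continuous_heatKernel dt).measurable.comp
    (hb.sub (ha.sub (((measurable_gradient V).comp ha).const_smul dt)))

lemma integrable_Tker (V : En n → ℝ) (hdt : 0 < dt) (q : En n) : Integrable (Tker V dt q) :=
  ((integrable_heatKernel hdt).comp_sub_right _).congr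
    (ae_of_all _ fun q' => (Tker_eq_heatKernel V dt q q').symm)

lemma integral_Tker (V : En n → ℝ) (hdt : 0 < dt) (q : En n) : ∫ q', Tker V dt q q' = 1 := by
  simp only [Tker_eq_heatKernel]
  rw [integral_sub_right_eq_self (heatKernel dt), integral_heatKernel hdt]

/-- The density of the accepted moves of the MALA chain started at `q`: proposal density times
acceptance probability. Its mass is less than one, the rest being the probability of a rejection. -/
def acceptedDensity (V : En n → ℝ) (dt : ℝ) (q q' : En n) : ℝ := Rk V dt q q' * Tker V dt q q'

lemma acceptedDensity_nonneg (V : En n → ℝ) (hdt : 0 < dt) (q q' : En n) :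
    0 ≤ acceptedDensity V dt q q' := by
  have h := Tker_pos V hdt q q'
  have h' := Tker_pos V hdt q' q
  unfold acceptedDensity Rk
  positivity

lemma acceptedDensity_le_Tker (V : En n → ℝ) (hdt : 0 < dt) (q q' : En n) :
    acceptedDensity V dt q q' ≤ Tker V dt q q' :=
  mul_le_of_le_one_left (Tker_pos V hdt q q').le (min_le_left _ _)

lemma exp_neg_mul_acceptedDensity (V : En n → ℝ) (hdt : 0 < dt) (q q' : En n) :
    Real.exp (-V q) * acceptedDensity V dt q q' =
      min (Real.exp (-V q) * Tker V dt q q') (Real.exp (-V q') * Tker V dt q' q) := by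
  have h := Tker_pos V hdt q q'
  unfold acceptedDensity Rk
  rw [mul_left_comm, min_mul_of_nonneg _ _ (by positivity), one_mul,
    div_mul_cancel₀ _ (by positivity)]

lemma acceptedDensity_detailed_balance (V : En n → ℝ) (hdt : 0 < dt) (q q' : En n) :
    Real.exp (-V q) * acceptedDensity V dt q q' = Real.exp (-V q') * acceptedDensity V dt q' q := by
  rw [exp_neg_mul_acceptedDensity V hdt, exp_neg_mul_acceptedDensity V hdt, min_comm]

lemma acceptedDensity_add_add {v : En n} (hV : Function.Periodic V v) (q q' : En n) :
    acceptedDensity V dt (q + v) (q' + v) = acceptedDensity V dt q q' := by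
  simp only [acceptedDensity, Rk, Tker, hV _, periodic_gradient hV _, add_sub_add_right_eq_sub]

lemma measurable_acceptedDensity (hV : Measurable V) (dt : ℝ) {X : Type*} [MeasurableSpace X]
    {a b : X → En n} (ha : Measurable a) (hb : Measurable b) :
    Measurable fun x => acceptedDensity V dt (a x) (b x) := by
  have hab := measurable_Tker V dt ha hb
  have hba := measurable_Tker V dt hb ha
  have hVa := (hV.comp ha).neg.exp
  have hVb := (hV.comp hb).neg.exp
  exact (measurable_const.min ((hVb.mul hba).div (hVa.mul hab))).mul hab

lemma integrable_acceptedDensity (hV : Measurable V) (hdt : 0 < dt) (q : En n) :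
    Integrable (acceptedDensity V dt q) := by
  refine (integrable_Tker V hdt q).mono'
    (measurable_acceptedDensity hV dt measurable_const measurable_id).aestronglyMeasurable
    (ae_of_all _ fun q' => ?_)
  rw [Real.norm_of_nonneg (acceptedDensity_nonneg V hdt q q')]
  exact acceptedDensity_le_Tker V hdt q q'

lemma integral_acceptedDensity_le_one (hV : Measurable V) (hdt : 0 < dt) (q : En n) :
    ∫ q', acceptedDensity V dt q q' ≤ 1 :=
  (integral_mono (integrable_acceptedDensity hV hdt q) (integrable_Tker V hdt q)
    (acceptedDensity_le_Tker V hdt q)).trans_eq (integral_Tker V hdt q)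

lemma integrable_acceptedDensity_prod (hV : Measurable V) (hdt : 0 < dt) (ν : Measure (En n))
    [IsFiniteMeasure ν] :
    Integrable (fun p : En n × En n => acceptedDensity V dt p.1 (p.1 + p.2)) (ν.prod volume) := by
  have hmeas : Measurable fun p : En n × En n => acceptedDensity V dt p.1 (p.1 + p.2) :=
    measurable_acceptedDensity hV dt measurable_fst (measurable_fst.add measurable_snd)
  have hmass : ∀ q, ∫ d, ‖acceptedDensity V dt q (q + d)‖ = ∫ q', acceptedDensity V dt q q' := by
    intro q
    simp only [Real.norm_of_nonneg (acceptedDensity_nonneg V hdt _ _)]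
    exact integral_add_left_eq_self (acceptedDensity V dt q) q
  refine (integrable_prod_iff hmeas.aestronglyMeasurable).2
    ⟨ae_of_all _ fun q => (integrable_acceptedDensity hV hdt q).comp_add_left q,
      .of_bound hmeas.stronglyMeasurable.norm.integral_prod_right.aestronglyMeasurable 1
        (ae_of_all _ fun q => ?_)⟩
  rw [hmass, Real.norm_of_nonneg (integral_nonneg (acceptedDensity_nonneg V hdt q))]
  exact integral_acceptedDensity_le_one hV hdt q

section Bounded

variable {f : En n → ℝ} {B : ℝ}

lemma integrable_acceptedDensity_mul (hV : Measurable V) (hdt : 0 < dt) (hf : Measurable f)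
    (hB : ∀ q, |f q| ≤ B) (q : En n) : Integrable fun q' => acceptedDensity V dt q q' * f q' :=
  (integrable_acceptedDensity hV hdt q).mul_bdd hf.aestronglyMeasurable (ae_of_all _ hB)

lemma Pmala_eq (hV : Measurable V) (hdt : 0 < dt) (hf : Measurable f) (hB : ∀ q, |f q| ≤ B)
    (q : En n) : Pmala V dt f q = (1 - ∫ q', acceptedDensity V dt q q') * f q +
      ∫ q', acceptedDensity V dt q q' * f q' := by
  change f q + ∫ q', acceptedDensity V dt q q' * (f q' - f q) = _
  simp only [mul_sub]
  rw [integral_sub (integrable_acceptedDensity_mul hV hdt hf hB q)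
    ((integrable_acceptedDensity hV hdt q).mul_const _), integral_mul_const]
  ring

lemma integral_acceptedDensity_mul_le_Pmala (hV : Measurable V) (hdt : 0 < dt) (hf : Measurable f)
    (hB : ∀ q, |f q| ≤ B) (hf0 : 0 ≤ f) (q : En n) :
    ∫ q', acceptedDensity V dt q q' * f q' ≤ Pmala V dt f q := by
  rw [Pmala_eq hV hdt hf hB]
  exact le_add_of_nonneg_left
    (mul_nonneg (sub_nonneg.2 (integral_acceptedDensity_le_one hV hdt q)) (hf0 q))

lemma abs_Pmala_le (hV : Measurable V) (hdt : 0 < dt) (hf : Measurable f) (hB : ∀ q, |f q| ≤ B)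
    (q : En n) : |Pmala V dt f q| ≤ B := by
  have hacc := integral_acceptedDensity_le_one hV hdt q
  have hmove : |∫ q', acceptedDensity V dt q q' * f q'| ≤
      (∫ q', acceptedDensity V dt q q') * B := by
    rw [← integral_mul_const]
    refine norm_integral_le_of_norm_le (G := ℝ)
      ((integrable_acceptedDensity hV hdt q).mul_const B) (ae_of_all _ fun q' => ?_)
    rw [norm_mul, Real.norm_of_nonneg (acceptedDensity_nonneg V hdt q q')]
    exact mul_le_mul_of_nonneg_left (hB q') (acceptedDensity_nonneg V hdt q q')
  have hstay : |(1 - ∫ q', acceptedDensity V dt q q') * f q| ≤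
      (1 - ∫ q', acceptedDensity V dt q q') * B := by
    rw [abs_mul, abs_of_nonneg (sub_nonneg.2 hacc)]
    exact mul_le_mul_of_nonneg_left (hB q) (sub_nonneg.2 hacc)
  rw [Pmala_eq hV hdt hf hB]
  linarith [abs_add_le ((1 - ∫ q', acceptedDensity V dt q q') * f q)
    (∫ q', acceptedDensity V dt q q' * f q')]

end Bounded

lemma measurable_Pmala (hV : Measurable V) (dt : ℝ) {f : En n → ℝ} (hf : Measurable f) :
    Measurable (Pmala V dt f) := by
  have hjump : Measurable fun p : En n × En n =>
      acceptedDensity V dt p.1 p.2 * (f p.2 - f p.1) :=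
    (measurable_acceptedDensity hV dt measurable_fst measurable_snd).mul
      ((hf.comp measurable_snd).sub (hf.comp measurable_fst))
  exact hf.add hjump.stronglyMeasurable.integral_prod_right.measurable

lemma periodic_Pmala {f : En n → ℝ} {v : En n} (hV : Function.Periodic V v)
    (hf : Function.Periodic f v) : Function.Periodic (Pmala V dt f) v := fun q => by
  change f (q + v) + ∫ q', acceptedDensity V dt (q + v) q' * (f q' - f (q + v)) =
    f q + ∫ q', acceptedDensity V dt q q' * (f q' - f q)
  rw [← integral_add_right_eq_self _ v]
  simp only [acceptedDensity_add_add hV, hf _]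

end MalaKernel

section TorusFunctions

variable {n : ℕ} {L : ℝ} {V : En n → ℝ}

/-- The algebra of bounded measurable functions on the torus `(ℝ/Lℤ)ⁿ`, seen as periodic functions
on `ℝⁿ`; the MALA operator acts on it. -/
def torusFunctions (n : ℕ) (L : ℝ) : Subalgebra ℝ (En n → ℝ) where
  carrier := {f | Measurable f ∧ CoordPeriodic L f ∧ ∃ B, ∀ q, |f q| ≤ B}
  mul_mem' := by
    rintro f g ⟨hf, hfper, B, hB⟩ ⟨hg, hgper, B', hB'⟩
    refine ⟨hf.mul hg, fun i => (hfper i).mul (hgper i), B * B', fun q => ?_⟩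
    rw [Pi.mul_apply, abs_mul]
    exact mul_le_mul (hB q) (hB' q) (abs_nonneg _) ((abs_nonneg _).trans (hB q))
  add_mem' := by
    rintro f g ⟨hf, hfper, B, hB⟩ ⟨hg, hgper, B', hB'⟩
    exact ⟨hf.add hg, fun i => (hfper i).add (hgper i), B + B',
      fun q => (abs_add_le _ _).trans (add_le_add (hB q) (hB' q))⟩
  algebraMap_mem' c := ⟨measurable_const, fun _ _ => rfl, |c|, fun _ => le_rfl⟩

lemma mem_torusFunctions_of_continuous (hL : 0 < L) {f : En n → ℝ} (hc : Continuous f)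
    (hf : CoordPeriodic L f) : f ∈ torusFunctions n L :=
  ⟨hc.measurable, hf, exists_norm_le_of_coordPeriodic hL hc hf⟩

lemma exp_neg_mem_torusFunctions (hL : 0 < L) (hV : Continuous V) (hper : CoordPeriodic L V) :
    (fun q => Real.exp (-V q)) ∈ torusFunctions n L :=
  mem_torusFunctions_of_continuous hL (by fun_prop)
    fun i => (hper i).comp fun v => Real.exp (-v)

lemma integrableOn_box_of_mem_torusFunctions (hL : 0 < L) {f : En n → ℝ}
    (hf : f ∈ torusFunctions n L) : IntegrableOn f (Box n L) := by
  have := isFiniteMeasure_restrict_box (n := n) hL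
  obtain ⟨hfm, -, B, hB⟩ := hf
  exact Integrable.of_bound hfm.aestronglyMeasurable B (ae_of_all _ hB)

lemma isUniformlyClosed_torusFunctions : IsUniformlyClosed (torusFunctions n L) := by
  intro u g hu
  refine ⟨measurable_of_tendsto_metrizable (fun m => (u m).2.1) (tendsto_pi_nhds.2 hu.tendsto_at),
    fun i q => ?_, ?_⟩
  · exact tendsto_nhds_unique (hu.tendsto_at _)
      ((hu.tendsto_at q).congr fun m => ((u m).2.2.1 i q).symm)
  · obtain ⟨m, hm⟩ := (Metric.tendstoUniformly_iff.1 hu 1 one_pos).exists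
    obtain ⟨B, hB⟩ := (u m).2.2.2
    refine ⟨B + 1, fun q => ?_⟩
    have hdist := hm q
    rw [Real.dist_eq] at hdist
    linarith [abs_sub_abs_le_abs_sub (g q) ((u m).1 q), hB q]

/-- The Gibbs probability measure `μ` on the torus, carried by the period cell `Box n L`. -/
def gibbs (V : En n → ℝ) (L : ℝ) : Measure (En n) :=
  (volume.restrict (Box n L)).tilted fun q => -V q

lemma muInt_eq_integral_gibbs (V : En n → ℝ) (L : ℝ) (f : En n → ℝ) :
    muInt V L f = ∫ q, f q ∂gibbs V L := by
  rw [muInt, gibbs, integral_tilted, ← integral_const_mul]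
  congr 1 with q
  rw [smul_eq_mul]
  ring

lemma isProbabilityMeasure_gibbs (hL : 0 < L) (hV : Continuous V) (hper : CoordPeriodic L V) :
    IsProbabilityMeasure (gibbs V L) := by
  have := neZero_restrict_box (n := n) hL
  exact isProbabilityMeasure_tilted
    (integrableOn_box_of_mem_torusFunctions hL (exp_neg_mem_torusFunctions hL hV hper))

lemma integrable_gibbs (hL : 0 < L) (hV : Continuous V) (hper : CoordPeriodic L V)
    (f : torusFunctions n L) : Integrable f.1 (gibbs V L) := by
  have := isProbabilityMeasure_gibbs hL hV hper
  obtain ⟨f, hf, -, B, hB⟩ := f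
  exact .of_bound hf.aestronglyMeasurable B (ae_of_all _ hB)

lemma exists_integral_gibbs_le (hL : 0 < L) (hV : Continuous V) (hper : CoordPeriodic L V) :
    ∃ D > 0, ∀ φ : torusFunctions n L, 0 ≤ φ →
      ∫ q, φ.1 q ∂gibbs V L ≤ D * ∫ q in Box n L, φ.1 q := by
  have hexp := exp_neg_mem_torusFunctions hL hV hper
  obtain ⟨-, -, B, hB⟩ := id hexp
  have := neZero_restrict_box (n := n) hL
  have hZ : 0 < ∫ q in Box n L, Real.exp (-V q) :=
    integral_exp_pos (integrableOn_box_of_mem_torusFunctions hL hexp)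
  have hB0 : 0 < B := (abs_pos.2 (Real.exp_pos (-V 0)).ne').trans_le (hB 0)
  refine ⟨(∫ q in Box n L, Real.exp (-V q))⁻¹ * B, by positivity, fun φ hφ => ?_⟩
  have hmono : ∫ q in Box n L, φ.1 q * Real.exp (-V q) ≤ ∫ q in Box n L, B * φ.1 q :=
    integral_mono (integrableOn_box_of_mem_torusFunctions hL (mul_mem φ.2 hexp))
      ((integrableOn_box_of_mem_torusFunctions hL φ.2).const_mul B) fun q => by
        rw [mul_comm B]
        exact mul_le_mul_of_nonneg_left ((le_abs_self _).trans (hB q)) (hφ q)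
  rw [← muInt_eq_integral_gibbs, muInt, mul_assoc, ← integral_const_mul B]
  exact mul_le_mul_of_nonneg_left hmono (inv_nonneg.2 hZ.le)

end TorusFunctions

section MalaOperator

variable {n : ℕ} {V : En n → ℝ} {dt L : ℝ}

/-- The MALA transition operator as an endomorphism of the bounded measurable functions on the
torus. -/
def malaOp (hV : Measurable V) (hper : CoordPeriodic L V) (hdt : 0 < dt) :
    Module.End ℝ (torusFunctions n L) where
  toFun f := ⟨Pmala V dt f.1, measurable_Pmala hV dt f.2.1,
    fun i => periodic_Pmala (hper i) (f.2.2.1 i), f.2.2.2.imp fun _ => abs_Pmala_le hV hdt f.2.1⟩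
  map_add' f g := by
    obtain ⟨hf, -, B, hB⟩ := f.2
    obtain ⟨hg, -, B', hB'⟩ := g.2
    obtain ⟨hfg, -, B'', hB''⟩ := (f + g).2
    have hsum : ∀ q, ∫ q', acceptedDensity V dt q q' * (f + g).1 q' =
        (∫ q', acceptedDensity V dt q q' * f.1 q') + ∫ q', acceptedDensity V dt q q' * g.1 q' :=
      fun q => by
        rw [← integral_add (integrable_acceptedDensity_mul hV hdt hf hB q)
          (integrable_acceptedDensity_mul hV hdt hg hB' q)]
        simp only [← mul_add]
        rfl
    refine Subtype.ext (funext fun q => ?_)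
    change Pmala V dt (f + g).1 q = Pmala V dt f.1 q + Pmala V dt g.1 q
    rw [Pmala_eq hV hdt hfg hB'', Pmala_eq hV hdt hf hB, Pmala_eq hV hdt hg hB', hsum]
    change _ * (f.1 q + g.1 q) + _ = _
    ring
  map_smul' c f := Subtype.ext (funext fun q => by
    simp [Pmala, ← mul_sub, mul_left_comm _ c, mul_add, integral_const_mul])

lemma isMarkovOperator_malaOp (hV : Measurable V) (hper : CoordPeriodic L V) (hdt : 0 < dt) :
    IsMarkovOperator (malaOp hV hper hdt) where
  map_one := Subtype.ext (funext fun q => by simp [malaOp, Pmala])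
  map_nonneg := by
    rintro ⟨f, hf, hfper, B, hB⟩ hf0 q
    exact (integral_nonneg fun q' => mul_nonneg (acceptedDensity_nonneg V hdt q q') (hf0 q')).trans
      (integral_acceptedDensity_mul_le_Pmala hV hdt hf hB hf0 q)

lemma malaOp_pow_apply (hV : Measurable V) (hper : CoordPeriodic L V) (hdt : 0 < dt) (k : ℕ)
    (f : torusFunctions n L) : ((malaOp hV hper hdt ^ k) f).1 = (Pmala V dt)^[k] f.1 := by
  rw [Module.End.coe_pow]
  exact Function.Semiconj.iterate_right (f := Subtype.val) (fun _ => rfl) k f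

lemma setIntegral_box_integral_acceptedDensity_mul_sub (hL : 0 < L) (hV : Continuous V)
    (hper : CoordPeriodic L V) (hdt : 0 < dt) {f : En n → ℝ} (hf : f ∈ torusFunctions n L) :
    ∫ q in Box n L, ∫ q', Real.exp (-V q) * acceptedDensity V dt q q' * (f q' - f q) = 0 := by
  have := isFiniteMeasure_restrict_box (n := n) hL
  obtain ⟨hexp, -, C, hC⟩ := exp_neg_mem_torusFunctions hL hV hper
  obtain ⟨hfm, hfper, B, hB⟩ := hf
  have hbdd : ∀ p : En n × En n, ‖Real.exp (-V p.1) * (f (p.1 + p.2) - f p.1)‖ ≤ C * (B + B) :=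
    fun p => by
      rw [norm_mul]
      exact mul_le_mul (hC _) ((abs_sub _ _).trans (add_le_add (hB _) (hB _))) (norm_nonneg _)
        ((abs_nonneg _).trans (hC p.1))
  have hmeas : Measurable fun p : En n × En n => Real.exp (-V p.1) * (f (p.1 + p.2) - f p.1) :=
    (hexp.comp measurable_fst).mul ((hfm.comp (measurable_fst.add measurable_snd)).sub
      (hfm.comp measurable_fst))
  have hint := (integrable_acceptedDensity_prod hV.measurable hdt
    (volume.restrict (Box n L))).mul_bdd hmeas.aestronglyMeasurable (ae_of_all _ hbdd)
  rw [box_eq_fundamentalDomain hL] at hint ⊢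
  refine setIntegral_fundamentalDomain_eq_zero_of_antisymm _ volume (fun i q q' => ?_)
    (fun q q' => ?_) (hint.congr (ae_of_all _ fun p => by ring))
  · simp only [periodBasis_apply, acceptedDensity_add_add (hper i), hper i _, hfper i _]
  · rw [acceptedDensity_detailed_balance V hdt q' q]
    ring

lemma integral_gibbs_malaOp (hL : 0 < L) (hV : Continuous V) (hper : CoordPeriodic L V)
    (hdt : 0 < dt) (f : torusFunctions n L) :
    ∫ q, (malaOp hV.measurable hper hdt f).1 q ∂gibbs V L = ∫ q, f.1 q ∂gibbs V L := by
  have hjump : ∀ q, ((malaOp hV.measurable hper hdt f).1 q - f.1 q) * Real.exp (-V q) =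
      ∫ q', Real.exp (-V q) * acceptedDensity V dt q q' * (f.1 q' - f.1 q) := fun q => by
    simp only [mul_assoc, integral_const_mul]
    exact (congrArg (· * _) (add_sub_cancel_left _ _)).trans (mul_comm _ _)
  rw [← sub_eq_zero, ← integral_sub (integrable_gibbs hL hV hper _)
    (integrable_gibbs hL hV hper _), ← muInt_eq_integral_gibbs, muInt]
  simp only [hjump]
  rw [setIntegral_box_integral_acceptedDensity_mul_sub hL hV hper hdt f.2, mul_zero]

end MalaOperator

/-! ### Comparison with the heat semigroup -/

-- Cauchy–Schwarz: the polynomial `s² ∫ A - 2 s ∫ u + ∫ B` in `s` is nonnegative.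
lemma sq_integral_le_mul_integral {X : Type*} [MeasurableSpace X] {ν : Measure X} {u A B : X → ℝ}
    (hA : Integrable A ν) (hB : Integrable B ν) (hA0 : 0 ≤ A) (hB0 : 0 ≤ B)
    (hu : ∀ x, u x ^ 2 ≤ A x * B x) :
    (∫ x, u x ∂ν) ^ 2 ≤ (∫ x, A x ∂ν) * ∫ x, B x ∂ν := by
  by_cases hui : Integrable u ν
  swap
  · rw [integral_undef hui, zero_pow two_ne_zero]
    exact mul_nonneg (integral_nonneg hA0) (integral_nonneg hB0)
  have hpt : ∀ s x, 2 * s * u x ≤ s ^ 2 * A x + B x := fun s x => by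
    refine (le_abs_self _).trans (abs_le_of_sq_le_sq ?_
      (add_nonneg (mul_nonneg (sq_nonneg s) (hA0 x)) (hB0 x)))
    nlinarith [sq_nonneg (s ^ 2 * A x - B x), mul_le_mul_of_nonneg_left (hu x) (sq_nonneg s)]
  have hquad : ∀ s, 0 ≤ (∫ x, A x ∂ν) * (s * s) + -(2 * ∫ x, u x ∂ν) * s + ∫ x, B x ∂ν :=
    fun s => by
      have h := integral_mono (hui.const_mul (2 * s)) ((hA.const_mul (s ^ 2)).add hB) (hpt s)
      rw [integral_const_mul, integral_add' (hA.const_mul _) hB, integral_const_mul] at h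
      linarith
  have h := discrim_le_zero hquad
  rw [discrim] at h
  linarith

lemma rpow_neg_div_two_le_exp {y m : ℝ} (hy0 : 0 ≤ y) (hy : 2 * y ≤ 1) (hm : 0 ≤ m) :
    (1 - y) ^ (-m / 2) ≤ Real.exp (m * y) := by
  have hexp : Real.exp (-(2 * y)) ≤ 1 - y := by
    rw [Real.exp_neg, inv_le_comm₀ (Real.exp_pos _) (by linarith)]
    refine le_trans ?_ (Real.add_one_le_exp _)
    rw [inv_le_iff_one_le_mul₀ (by linarith)]
    nlinarith
  refine (Real.rpow_le_rpow_of_nonpos (Real.exp_pos _) hexp (by linarith)).trans_eq ?_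
  rw [← Real.exp_mul]
  ring_nf

section ChiSquare

variable {E : Type*} [NormedAddCommGroup E] [InnerProductSpace ℝ E]

lemma heatKernel_mul_exp_tilt (t c : ℝ) (v z : E) :
    heatKernel t z * Real.exp (⟪v, z⟫ / 2 + c * (‖z‖ ^ 2 + t)) = Real.exp (c * t) *
      (heatKernel t z * Real.exp (c * ‖z‖ ^ 2 + ⟪(1 / 2 : ℝ) • v, z⟫)) := by
  rw [mul_left_comm, ← Real.exp_add, real_inner_smul_left]
  ring_nf

variable [FiniteDimensional ℝ E] [MeasurableSpace E] [BorelSpace E] {t c : ℝ}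

-- The term linear in `z` costs only `O(t)` because the heat kernel is centred.
lemma integral_heatKernel_mul_exp_tilt_le (ht : 0 < t) (hc : 0 ≤ c) (hct : 8 * c * t ≤ 1) (v : E) :
    ∫ z, heatKernel t z * Real.exp (⟪v, z⟫ / 2 + c * (‖z‖ ^ 2 + t)) ≤
      Real.exp ((c + 4 * c * Module.finrank ℝ E + ‖v‖ ^ 2 / 2) * t) := by
  have hct0 : 0 ≤ c * t := by positivity
  have hpow := rpow_neg_div_two_le_exp (y := 4 * t * c) (m := Module.finrank ℝ E)
    (by linarith) (by linarith) (by positivity)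
  have hdrift : t * ‖(1 / 2 : ℝ) • v‖ ^ 2 / (1 - 4 * t * c) ≤ ‖v‖ ^ 2 / 2 * t := by
    rw [norm_smul, mul_pow, Real.norm_eq_abs, sq_abs, div_le_iff₀ (by linarith)]
    nlinarith [mul_nonneg ht.le (sq_nonneg ‖v‖)]
  simp only [heatKernel_mul_exp_tilt]
  rw [integral_const_mul, integral_heatKernel_mul_exp ht (by linarith)]
  calc _ ≤ Real.exp (c * t) * (Real.exp (Module.finrank ℝ E * (4 * t * c)) *
        Real.exp (‖v‖ ^ 2 / 2 * t)) := by gcongr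
    _ = _ := by
      rw [← Real.exp_add, ← Real.exp_add]
      ring_nf

lemma sq_integral_heatKernel_mul_le (ht : 0 < t) (hc : 0 ≤ c) (hct : 8 * c * t ≤ 1) {v : E}
    {p g : E → ℝ} (hp : ∀ z, heatKernel t z * Real.exp (-(⟪v, z⟫ / 2 + c * (‖z‖ ^ 2 + t))) ≤ p z)
    (hpg : Integrable fun z => p z * g z ^ 2) :
    (∫ z, heatKernel t z * g z) ^ 2 ≤
      Real.exp ((c + 4 * c * Module.finrank ℝ E + ‖v‖ ^ 2 / 2) * t) * ∫ z, p z * g z ^ 2 := by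
  have hp0 : ∀ z, 0 ≤ p z := fun z =>
    (mul_nonneg (heatKernel_pos ht z).le (Real.exp_pos _).le).trans (hp z)
  have hpg0 : ∀ z, 0 ≤ p z * g z ^ 2 := fun z => mul_nonneg (hp0 z) (sq_nonneg _)
  have hA0 : ∀ z, 0 ≤ heatKernel t z * Real.exp (⟪v, z⟫ / 2 + c * (‖z‖ ^ 2 + t)) := fun z =>
    mul_nonneg (heatKernel_pos ht z).le (Real.exp_pos _).le
  have hA : Integrable fun z => heatKernel t z * Real.exp (⟪v, z⟫ / 2 + c * (‖z‖ ^ 2 + t)) := by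
    simp only [heatKernel_mul_exp_tilt]
    refine (integrable_heatKernel_mul_exp ht ?_ _).const_mul _
    linarith [mul_nonneg hc ht.le]
  refine (sq_integral_le_mul_integral hA hpg hA0 hpg0 fun z => ?_).trans
    (mul_le_mul_of_nonneg_right (integral_heatKernel_mul_exp_tilt_le ht hc hct v)
      (integral_nonneg hpg0))
  set w := ⟪v, z⟫ / 2 + c * (‖z‖ ^ 2 + t)
  calc (heatKernel t z * g z) ^ 2
      = heatKernel t z * Real.exp w * (heatKernel t z * Real.exp (-w) * g z ^ 2) := by
        rw [Real.exp_neg]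
        field_simp
    _ ≤ heatKernel t z * Real.exp w * (p z * g z ^ 2) :=
        mul_le_mul_of_nonneg_left (mul_le_mul_of_nonneg_right (hp z) (sq_nonneg _)) (hA0 z)

end ChiSquare

section Comparison

variable {n : ℕ} {V : En n → ℝ} {dt L G : ℝ} {M : NNReal}

lemma Tker_eq_heatKernel_mul_exp (V : En n → ℝ) (hdt : 0 < dt) (q q' : En n) :
    Tker V dt q q' = heatKernel dt (q' - q) *
      Real.exp (-(⟪gradient V q, q' - q⟫ / 2 + dt * ‖gradient V q‖ ^ 2 / 4)) := by
  rw [Tker, heatKernel, finrank_euclideanSpace_fin, mul_assoc (_ ^ _), ← Real.exp_add]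
  congr 2
  rw [norm_add_sq_real, real_inner_smul_right, norm_smul, mul_pow, Real.norm_eq_abs, sq_abs,
    real_inner_comm]
  field_simp
  ring

-- Both terms of the Metropolis minimum have this form, because the drifts at `q` and `q'` and the
-- increment of `V` agree to second order.
lemma heatKernel_mul_exp_le_acceptedDensity (hVd : Differentiable ℝ V)
    (hlip : LipschitzWith M (gradient V)) (hG : ∀ q, ‖gradient V q‖ ≤ G) (hdt : 0 < dt)
    (q q' : En n) :
    heatKernel dt (q' - q) * Real.exp (-(⟪gradient V q, q' - q⟫ / 2 +
      (2 * M + G ^ 2) * (‖q' - q‖ ^ 2 + dt))) ≤ acceptedDensity V dt q q' := by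
  have htaylor := abs_le.1 (abs_sub_sub_inner_gradient_le hVd hlip q q')
  have hdrift : ⟪gradient V q, q' - q⟫ - M * ‖q' - q‖ ^ 2 ≤ ⟪gradient V q', q' - q⟫ := by
    have hcs := neg_le_of_abs_le (abs_real_inner_le_norm (gradient V q' - gradient V q) (q' - q))
    rw [inner_sub_left] at hcs
    nlinarith [mul_le_mul_of_nonneg_right (hlip.norm_sub_le q' q) (norm_nonneg (q' - q))]
  have hgrad : ∀ x, dt * ‖gradient V x‖ ^ 2 ≤ G ^ 2 * dt := fun x => by
    rw [mul_comm]
    gcongr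
    exact hG x
  have hMdt : 0 ≤ M * dt := by positivity
  have hGdt : 0 ≤ G ^ 2 * dt := by positivity
  have hGd : 0 ≤ G ^ 2 * ‖q' - q‖ ^ 2 := by positivity
  refine le_of_mul_le_mul_left ?_ (Real.exp_pos (-V q))
  rw [exp_neg_mul_acceptedDensity V hdt, Tker_eq_heatKernel_mul_exp V hdt q q',
    Tker_eq_heatKernel_mul_exp V hdt q' q, ← neg_sub q' q, heatKernel_neg, inner_neg_right,
    mul_left_comm, mul_left_comm _ (heatKernel dt _), mul_left_comm _ (heatKernel dt _)]
  simp only [← Real.exp_add]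
  refine le_min ?_ ?_ <;>
    refine mul_le_mul_of_nonneg_left (Real.exp_le_exp.2 ?_) (heatKernel_pos hdt _).le
  · linarith [hgrad q]
  · linarith [hgrad q']

/-- The exponential rate, per unit of time, at which the heat semigroup and the MALA chain in
dimension `n` drift apart when `∇V` is `M`-Lipschitz and bounded by `G`. -/
def comparisonRate (n : ℕ) (M : NNReal) (G : ℝ) : ℝ :=
  2 * M + G ^ 2 + 4 * (2 * M + G ^ 2) * n + G ^ 2 / 2

lemma sq_heatOp_le_exp_mul_Pmala (hVd : Differentiable ℝ V) (hlip : LipschitzWith M (gradient V))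
    (hG : ∀ q, ‖gradient V q‖ ≤ G) (hdt : 0 < dt) (hsmall : 8 * (2 * M + G ^ 2) * dt ≤ 1)
    {g : En n → ℝ} (hg : Measurable (g ^ 2)) (hB : ∃ B, ∀ q, |(g ^ 2) q| ≤ B) (x : En n) :
    heatOp dt g x ^ 2 ≤ Real.exp (comparisonRate n M G * dt) * Pmala V dt (g ^ 2) x := by
  obtain ⟨B, hB⟩ := hB
  have hV := hVd.continuous.measurable
  have hint := integrable_acceptedDensity_mul hV hdt hg hB x
  have hlow := fun z => heatKernel_mul_exp_le_acceptedDensity hVd hlip hG hdt x (x + z)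
  simp only [add_sub_cancel_left] at hlow
  have hjump : 0 ≤ ∫ q', acceptedDensity V dt x q' * (g ^ 2) q' :=
    integral_nonneg fun q' => mul_nonneg (acceptedDensity_nonneg V hdt x q') (sq_nonneg _)
  calc heatOp dt g x ^ 2
      = (∫ z, heatKernel dt z * g (x + z)) ^ 2 := congrArg (· ^ 2) (integral_heatMeasure hdt _)
    _ ≤ Real.exp ((2 * M + G ^ 2 + 4 * (2 * M + G ^ 2) * n + ‖gradient V x‖ ^ 2 / 2) * dt) *
          ∫ z, acceptedDensity V dt x (x + z) * g (x + z) ^ 2 := by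
        simpa only [finrank_euclideanSpace_fin] using sq_integral_heatKernel_mul_le hdt
          (by positivity) hsmall hlow (hint.comp_add_left x)
    _ = Real.exp ((2 * M + G ^ 2 + 4 * (2 * M + G ^ 2) * n + ‖gradient V x‖ ^ 2 / 2) * dt) *
          ∫ q', acceptedDensity V dt x q' * (g ^ 2) q' :=
        congrArg _ (integral_add_left_eq_self (fun q' => acceptedDensity V dt x q' * (g ^ 2) q') x)
    _ ≤ Real.exp (comparisonRate n M G * dt) * Pmala V dt (g ^ 2) x := by
        unfold comparisonRate
        gcongr
        · exact hG x
        · exact integral_acceptedDensity_mul_le_Pmala hV hdt hg hB (fun q => sq_nonneg (g q)) x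

end Comparison

section Minorization

variable {n : ℕ} {V : En n → ℝ} {dt L G : ℝ} {M : NNReal}

/-- The heat semigroup at time `dt` acting on the bounded measurable functions on the torus; its
iterates are compared with those of `malaOp`. -/
def torusHeatOp (n : ℕ) (L : ℝ) (hdt : 0 < dt) (g : torusFunctions n L) : torusFunctions n L :=
  ⟨heatOp dt g.1, measurable_heatOp hdt g.2.1,
    fun i x => by simp only [heatOp, add_right_comm x, g.2.2.1 i _],
    g.2.2.2.imp fun _ => abs_heatOp_le hdt⟩

lemma torusHeatOp_iterate_succ (hdt : 0 < dt) (g : torusFunctions n L) (k : ℕ) :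
    ((torusHeatOp n L hdt)^[k + 1] g).1 = heatOp ((k + 1 : ℕ) * dt) g.1 := by
  obtain ⟨hg, -, B, hB⟩ := g.2
  induction k with
  | zero => simp [torusHeatOp]
  | succ k ih =>
    rw [Function.iterate_succ_apply']
    change heatOp dt ((torusHeatOp n L hdt)^[k + 1] g).1 = _
    rw [ih, heatOp_heatOp hdt (by positivity) hg hB]
    congr 1
    push_cast
    ring

lemma sq_heatOp_le_exp_mul_malaOp_pow (hVd : Differentiable ℝ V)
    (hlip : LipschitzWith M (gradient V)) (hG : ∀ q, ‖gradient V q‖ ≤ G)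
    (hper : CoordPeriodic L V) (hdt : 0 < dt) (hsmall : 8 * (2 * M + G ^ 2) * dt ≤ 1) {N : ℕ}
    (hN : 0 < N) (g : torusFunctions n L) (x : En n) :
    heatOp (N * dt) g.1 x ^ 2 ≤ Real.exp (comparisonRate n M G * (N * dt)) *
      ((malaOp hVd.continuous.measurable hper hdt ^ N) (g ^ 2)).1 x := by
  obtain ⟨k, rfl⟩ := Nat.exists_eq_add_one.2 hN
  have h := (isMarkovOperator_malaOp hVd.continuous.measurable hper hdt).sq_iterate_le_pow
    (H := torusHeatOp n L hdt) (Real.exp_pos (comparisonRate n M G * dt)).le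
    (fun g x => sq_heatOp_le_exp_mul_Pmala hVd hlip hG hdt hsmall (g ^ 2).2.1 (g ^ 2).2.2.2 x)
    g (k + 1) x
  rwa [torusHeatOp_iterate_succ, ← Real.exp_nat_mul, mul_left_comm] at h

lemma exists_nat_mul_mem_Icc (hdt : 0 < dt) (hdt1 : dt ≤ 1) :
    ∃ N : ℕ, 0 < N ∧ (N : ℝ) * dt ∈ Set.Icc 1 2 := by
  refine ⟨⌈1 / dt⌉₊, Nat.ceil_pos.2 (by positivity), (div_le_iff₀ hdt).1 (Nat.le_ceil _), ?_⟩
  have h := (Nat.ceil_lt_add_one (by positivity : 0 ≤ 1 / dt)).le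
  calc (⌈1 / dt⌉₊ : ℝ) * dt ≤ (1 / dt + 1) * dt := by gcongr
    _ = 1 + dt := by field_simp
    _ ≤ 2 := by linarith

lemma exists_pos_mul_integral_gibbs_le_heatOp (hL : 0 < L) (hV : Continuous V)
    (hper : CoordPeriodic L V) : ∃ c > 0, ∀ t ∈ Set.Icc (1 : ℝ) 2, ∀ φ : torusFunctions n L,
      0 ≤ φ → ∀ x, c * ∫ q, φ.1 q ∂gibbs V L ≤ heatOp t φ.1 x := by
  obtain ⟨c, hc0, hc⟩ := exists_pos_mul_setIntegral_le_heatOp (periodBasis n hL) (b := 2) one_pos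
  obtain ⟨D, hD0, hD⟩ := exists_integral_gibbs_le hL hV hper
  refine ⟨c / D, div_pos hc0 hD0, fun t ht φ hφ x => ?_⟩
  calc c / D * ∫ q, φ.1 q ∂gibbs V L ≤ c / D * (D * ∫ q in Box n L, φ.1 q) :=
        mul_le_mul_of_nonneg_left (hD φ hφ) (div_pos hc0 hD0).le
    _ = c * ∫ q in ZSpan.fundamentalDomain (periodBasis n hL), φ.1 q := by
        rw [← mul_assoc, div_mul_cancel₀ _ hD0.ne', box_eq_fundamentalDomain hL]
    _ ≤ heatOp t φ.1 x :=
        hc t ht φ.1 φ.2.1 hφ φ.2.2.2 ((coordPeriodic_iff_periodBasis hL).1 φ.2.2.1) x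

lemma exists_minorization_malaOp (hL : 0 < L) (hVd : Differentiable ℝ V)
    (hlip : LipschitzWith M (gradient V)) (hper : CoordPeriodic L V) :
    ∃ δ > 0, ∃ dts > 0, ∀ (dt : ℝ) (hdt : 0 < dt), dt ≤ dts → ∃ N : ℕ, 0 < N ∧ N * dt ≤ 2 ∧
      ∀ φ : torusFunctions n L, 0 ≤ φ → φ ≤ 1 → ∀ x, δ * (∫ q, φ.1 q ∂gibbs V L) ^ 2 ≤
        ((malaOp hVd.continuous.measurable hper hdt ^ N) φ).1 x := by
  obtain ⟨G, hG⟩ := exists_norm_le_of_coordPeriodic hL hlip.continuous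
    fun i => periodic_gradient (hper i)
  obtain ⟨c, hc0, hc⟩ := exists_pos_mul_integral_gibbs_le_heatOp hL hVd.continuous hper
  set C := comparisonRate n M G
  have hC : 0 ≤ C := by
    unfold C comparisonRate
    positivity
  set r := 2 * M + G ^ 2
  refine ⟨c ^ 2 * Real.exp (-(C * 2)), by positivity, (8 * r + 1)⁻¹, by positivity,
    fun dt hdt hdts => ?_⟩
  have hsmall : (8 * r + 1) * dt ≤ 1 := (le_inv_mul_iff₀ (by positivity)).1 (by simpa using hdts)
  have hrdt : 0 ≤ 8 * r * dt := by positivity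
  obtain ⟨N, hN, hT⟩ := exists_nat_mul_mem_Icc hdt (by linarith)
  refine ⟨N, hN, hT.2, fun φ hφ0 hφ1 x => ?_⟩
  have hPN := (isMarkovOperator_malaOp hVd.continuous.measurable hper hdt).pow N
  have hsq : φ ^ 2 ≤ φ := fun q => pow_le_of_le_one (hφ0 q) (hφ1 q) two_ne_zero
  have hmean0 : 0 ≤ ∫ q, φ.1 q ∂gibbs V L := integral_nonneg hφ0
  calc c ^ 2 * Real.exp (-(C * 2)) * (∫ q, φ.1 q ∂gibbs V L) ^ 2
      = Real.exp (-(C * 2)) * (c * ∫ q, φ.1 q ∂gibbs V L) ^ 2 := by ring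
    _ ≤ Real.exp (-(C * (N * dt))) * (Real.exp (C * (N * dt)) *
          ((malaOp hVd.continuous.measurable hper hdt ^ N) (φ ^ 2)).1 x) := by
        gcongr
        · exact hT.2
        · exact (pow_le_pow_left₀ (by positivity) (hc _ hT φ hφ0 x) 2).trans
            (sq_heatOp_le_exp_mul_malaOp_pow hVd hlip hG hper hdt (by linarith) hN φ x)
    _ = ((malaOp hVd.continuous.measurable hper hdt ^ N) (φ ^ 2)).1 x := by
        rw [← mul_assoc, ← Real.exp_add, neg_add_cancel, Real.exp_zero, one_mul]
    _ ≤ ((malaOp hVd.continuous.measurable hper hdt ^ N) φ).1 x := hPN.mono hsq x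

end Minorization

theorem stmt7_general {n : ℕ} {L : ℝ} (hL : 0 < L) {V : En n → ℝ} (hVd : Differentiable ℝ V)
    {M : NNReal} (hlip : LipschitzWith M (gradient V)) (hper : CoordPeriodic L V) :
    ∃ K > (0 : ℝ), ∃ dts > (0 : ℝ), ∀ dt : ℝ, 0 < dt → dt ≤ dts →
      ∀ f : En n → ℝ, Measurable f → CoordPeriodic L f →
        muInt V L f = 0 → (∃ B : ℝ, ∀ q, |f q| ≤ B) →
        ∃ g : En n → ℝ,
          TendstoUniformly (fun (N : ℕ) (q : En n) =>
              ∑ k ∈ Finset.range N, (Pmala V dt)^[k] f q) g Filter.atTop ∧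
          (∀ q, g q - Pmala V dt g q = f q) ∧
          muInt V L g = 0 ∧
          (∀ B : ℝ, (∀ q, |f q| ≤ B) → ∀ q, dt * |g q| ≤ K * B) := by
  obtain ⟨δ, hδ, dts, hdts, hmin⟩ := exists_minorization_malaOp hL hVd hlip hper
  refine ⟨4 / δ, by positivity, dts, hdts, fun dt hdt hle f hf hfper hf0 hfb => ?_⟩
  have := isProbabilityMeasure_gibbs hL hVd.continuous hper
  obtain ⟨N, hN, hNdt, hminN⟩ := hmin dt hdt hle
  rw [muInt_eq_integral_gibbs] at hf0
  obtain ⟨g, hsum, hpoisson, hg0, hbound⟩ :=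
    (isMarkovOperator_malaOp hVd.continuous.measurable hper hdt).exists_poisson_solution
      (f := ⟨f, hf, hfper, hfb⟩) isUniformlyClosed_torusFunctions
      (integral_gibbs_malaOp hL hVd.continuous hper hdt)
      (integrable_gibbs hL hVd.continuous hper) hN hδ hminN hf0 hfb
  refine ⟨g.1, ?_, fun q => congrFun (congrArg Subtype.val hpoisson) q,
    (muInt_eq_integral_gibbs V L _).trans hg0, fun B hB q => ?_⟩
  · simpa [Finset.sum_apply, malaOp_pow_apply] using! hsum
  · have hB0 : 0 ≤ B := (abs_nonneg _).trans (hB q)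
    calc dt * |g.1 q| ≤ dt * (B * (2 * N / δ)) := mul_le_mul_of_nonneg_left (hbound B hB q) hdt.le
      _ = 2 * (N * dt) / δ * B := by ring
      _ ≤ 2 * 2 / δ * B := by gcongr
      _ = 4 / δ * B := by norm_num

theorem stmt7 (n : ℕ) (hn : 1 ≤ n) (L : ℝ) (hL : 0 < L)
    (V : En n → ℝ) (hV : ContDiff ℝ (⊤ : ℕ∞) V)
    (hper : ∀ (q : En n) (i : Fin n), V (q + L • EuclideanSpace.single i (1 : ℝ)) = V q) :
    ∃ K > (0 : ℝ), ∃ dts > (0 : ℝ), ∀ dt : ℝ, 0 < dt → dt ≤ dts →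
      ∀ f : En n → ℝ, Measurable f →
        (∀ (q : En n) (i : Fin n), f (q + L • EuclideanSpace.single i (1 : ℝ)) = f q) →
        muInt V L f = 0 → (∃ B : ℝ, ∀ q, |f q| ≤ B) →
        ∃ g : En n → ℝ,
          TendstoUniformly (fun (N : ℕ) (q : En n) =>
              ∑ k ∈ Finset.range N, (Pmala V dt)^[k] f q) g Filter.atTop ∧
          (∀ q, g q - Pmala V dt g q = f q) ∧
          muInt V L g = 0 ∧
          (∀ B : ℝ, (∀ q, |f q| ≤ B) → ∀ q, dt * |g q| ≤ K * B) := by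
  obtain ⟨M, hlip⟩ := exists_lipschitzWith_gradient hL (contDiff_infty.1 hV 2)
    fun i q => hper q i
  simpa only [CoordPeriodic, Function.Periodic, forall_comm (α := Fin n)] using
    stmt7_general hL (hV.differentiable (by simp)) hlip fun i q => hper q i
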